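/- Let F, G be real 3×3 matrices with positive determinant such that C := G^{-T} F^T F G^{-1} ≠ I, and suppose C has eigenvalues λ₁ ≤ 1, λ₂ = 1, λ₃ ≥ 1 (hence λ₁ < λ₃) with corresponding orthonormal eigenvectors û₁, û₂, û₃. For each κ ∈ {+1, −1} and any ρ ≠ 0, define a := ρ( √(λ₃(1−λ₁)/(λ₃−λ₁)) û₁ + κ √(λ₁(λ₃−1)/(λ₃−λ₁)) û₃ ) and n̂ := ((√λ₃ − √λ₁)/(ρ√(λ₃−λ₁))) ( −√(1−λ₁) G^T û₁ + κ √(λ₃−1) G^T û₃ ). Then there exists Q ∈ SO(3) such that Q F − G = a ⊗ n̂; moreover these two choices κ = ±1 give the two solutions of this equation (Ball–James). -/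

import Mathlib

open Matrix

noncomputable section

abbrev V3 : Type := Fin 3 → ℝ
abbrev M3 : Type := Matrix (Fin 3) (Fin 3) ℝ

/-- `Q` is a rotation matrix: `Q ∈ SO(3)`. -/
def SO3 (Q : M3) : Prop := Q.transpose * Q = 1 ∧ Q.det = 1

/-- Rank-one matrix `a ⊗ n` with entries `aᵢ nⱼ`. -/
def outer (a n : V3) : M3 := Matrix.vecMulVec a n

/-- The shear vector of the Ball–James solution. -/
def aSol (l1 l3 κ ρ : ℝ) (u1 u3 : V3) : V3 :=
  ρ • (Real.sqrt (l3 * (1 - l1) / (l3 - l1)) • u1 +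
       (κ * Real.sqrt (l1 * (l3 - 1) / (l3 - l1))) • u3)

/-- The interface normal of the Ball–James solution. -/
def nSol (l1 l3 κ ρ : ℝ) (G : M3) (u1 u3 : V3) : V3 :=
  ((Real.sqrt l3 - Real.sqrt l1) / (ρ * Real.sqrt (l3 - l1))) •
    ((-(Real.sqrt (1 - l1))) • (G.transpose.mulVec u1) +
     (κ * Real.sqrt (l3 - 1)) • (G.transpose.mulVec u3))

/-! Writing `n̂ = Gᵀ m`, the equation `Q F - G = a ⊗ n̂` can be solved for a rotation `Q` exactly
when `1 + a ⊗ m` has Gram matrix `C` and positive determinant `1 + a · m`. The quadratic form of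
that Gram matrix minus the identity is the product of the linear forms of `m` and `2 a + |a|² m`,
while that of `C - 1` is, up to sign, the product of the linear forms of `w 1` and `w (-1)`, where
`w κ = -√(1 - λ₁) û₁ + κ √(λ₃ - 1) û₃`. Linear forms being prime, `m` is a multiple `μ w κ` of one
of the two, which is the choice of `κ`, and `2 a + |a|² m = -μ⁻¹ w (-κ)`. Taking norms in this last
equation gives a quadratic equation for `|μ a|²`; the sign of `1 + a · m` selects one of its roots,
which determines `μ a`. The remaining freedom in `μ` is the parameter `ρ`. -/

section LinearForms

variable {K V : Type*} [Field K] [AddCommGroup V] [Module K V]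

theorem le_ker_or_le_ker_of_mul_eq_zero {W : Submodule K V} {φ ψ : Module.Dual K V}
    (h : ∀ x ∈ W, φ x * ψ x = 0) : W ≤ LinearMap.ker φ ∨ W ≤ LinearMap.ker ψ :=
  AddSubgroupClass.subset_union.mp fun x hx => mul_eq_zero.mp (h x hx)

theorem exists_eq_smul_of_ker_le_ker {f φ : Module.Dual K V}
    (h : LinearMap.ker f ≤ LinearMap.ker φ) : ∃ μ : K, φ = μ • f := by
  have hspan := mem_span_of_iInf_ker_le_ker (L := fun _ : Unit => f) (K := φ) (by simpa using h)
  rw [Set.range_const] at hspan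
  obtain ⟨μ, hμ⟩ := Submodule.mem_span_singleton.mp hspan
  exact ⟨μ, hμ.symm⟩

theorem exists_eq_smul_of_mul_eq_mul_of_ker_le_ker {f g φ ψ : Module.Dual K V} (hf : f ≠ 0)
    (hg : g ≠ 0) (h : ∀ x, φ x * ψ x = f x * g x) (hker : LinearMap.ker f ≤ LinearMap.ker φ) :
    ∃ μ : K, μ ≠ 0 ∧ φ = μ • f ∧ ψ = μ⁻¹ • g := by
  obtain ⟨μ, rfl⟩ := exists_eq_smul_of_ker_le_ker hker
  have hcancel : ∀ x ∈ (⊤ : Submodule K V), f x * (μ • ψ - g) x = 0 := fun x _ => by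
    simp only [LinearMap.sub_apply, LinearMap.smul_apply, smul_eq_mul] at h ⊢
    linear_combination h x
  rcases le_ker_or_le_ker_of_mul_eq_zero hcancel with hker | hker
  · exact absurd (LinearMap.ker_eq_top.mp (top_le_iff.mp hker)) hf
  · have hψ : μ • ψ = g := sub_eq_zero.mp (LinearMap.ker_eq_top.mp (top_le_iff.mp hker))
    have hμ : μ ≠ 0 := by
      rintro rfl
      exact hg (by rw [← hψ, zero_smul])
    exact ⟨μ, hμ, rfl, by rw [← hψ, inv_smul_smul₀ hμ]⟩

theorem exists_eq_smul_of_mul_eq_mul {f g φ ψ : Module.Dual K V} (hf : f ≠ 0) (hg : g ≠ 0)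
    (h : ∀ x, φ x * ψ x = f x * g x) :
    ∃ μ : K, μ ≠ 0 ∧ (φ = μ • f ∧ ψ = μ⁻¹ • g ∨ φ = μ • g ∧ ψ = μ⁻¹ • f) := by
  have hzero : ∀ x ∈ LinearMap.ker f, φ x * ψ x = 0 := fun x hx => by
    rw [h, LinearMap.mem_ker.mp hx, zero_mul]
  rcases le_ker_or_le_ker_of_mul_eq_zero hzero with hker | hker
  · obtain ⟨μ, hμ, hφ, hψ⟩ := exists_eq_smul_of_mul_eq_mul_of_ker_le_ker hf hg h hker
    exact ⟨μ, hμ, .inl ⟨hφ, hψ⟩⟩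
  · obtain ⟨μ, hμ, hψ, hφ⟩ := exists_eq_smul_of_mul_eq_mul_of_ker_le_ker hf hg
      (fun x => by rw [mul_comm, h]) hker
    exact ⟨μ⁻¹, inv_ne_zero hμ, .inr ⟨hφ, by rw [inv_inv, hψ]⟩⟩

end LinearForms

section SymmetricProduct

variable {n K : Type*} [Field K]

/-- The symmetric tensor product `v ⊙ w = (v ⊗ w + w ⊗ v) / 2`, normalised so that its quadratic
form is the product of the linear forms `v ⬝ᵥ ·` and `w ⬝ᵥ ·`. -/
def symOuter (v w : n → K) : Matrix n n K :=
  (2⁻¹ : K) • (vecMulVec v w + vecMulVec w v)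

theorem symOuter_comm (v w : n → K) : symOuter v w = symOuter w v := by
  rw [symOuter, symOuter, add_comm]

theorem symOuter_neg_right (v w : n → K) : symOuter v (-w) = -symOuter v w := by
  simp only [symOuter, vecMulVec_neg, neg_vecMulVec, ← neg_add, smul_neg]

theorem symOuter_smul_smul (c d : K) (v w : n → K) :
    symOuter (c • v) (d • w) = (c * d) • symOuter v w := by
  ext i j
  simp only [symOuter, Matrix.smul_apply, Matrix.add_apply, vecMulVec_apply, Pi.smul_apply,
    smul_eq_mul]
  ring

theorem dotProduct_symOuter_mulVec [Fintype n] [NeZero (2 : K)] (v w x : n → K) :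
    x ⬝ᵥ symOuter v w *ᵥ x = (v ⬝ᵥ x) * (w ⬝ᵥ x) := by
  simp only [symOuter, smul_mulVec, add_mulVec, vecMulVec_mulVec, op_smul_eq_smul,
    dotProduct_smul, dotProduct_add, smul_eq_mul]
  rw [dotProduct_comm x v, dotProduct_comm x w]
  field_simp
  ring

theorem symOuter_eq_symOuter_iff [Finite n] [NeZero (2 : K)] {f g v w : n → K} (hf : f ≠ 0)
    (hg : g ≠ 0) :
    symOuter v w = symOuter f g ↔
      ∃ μ : K, μ ≠ 0 ∧ (v = μ • f ∧ w = μ⁻¹ • g ∨ v = μ • g ∧ w = μ⁻¹ • f) := by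
  classical
  cases nonempty_fintype n
  constructor
  · intro h
    let e := dotProductEquiv K n
    have hmul (x : n → K) : e v x * e w x = e f x * e g x := by
      change (v ⬝ᵥ x) * (w ⬝ᵥ x) = (f ⬝ᵥ x) * (g ⬝ᵥ x)
      rw [← dotProduct_symOuter_mulVec, h, dotProduct_symOuter_mulVec]
    simpa only [← map_smul, e.injective.eq_iff] using
      exists_eq_smul_of_mul_eq_mul (e.map_ne_zero_iff.mpr hf) (e.map_ne_zero_iff.mpr hg) hmul
  · rintro ⟨μ, hμ, ⟨rfl, rfl⟩ | ⟨rfl, rfl⟩⟩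
    · rw [symOuter_smul_smul, mul_inv_cancel₀ hμ, one_smul]
    · rw [symOuter_smul_smul, mul_inv_cancel₀ hμ, one_smul, symOuter_comm]

theorem transpose_mul_self_one_add_vecMulVec [Fintype n] [DecidableEq n] [NeZero (2 : K)]
    (a m : n → K) :
    (1 + vecMulVec a m)ᵀ * (1 + vecMulVec a m) = 1 + symOuter m ((2 : K) • a + (a ⬝ᵥ a) • m) := by
  rw [transpose_add, transpose_one, transpose_vecMulVec, add_mul, one_mul, mul_add, mul_one,
    vecMulVec_mul_vecMulVec]
  ext i j
  simp only [symOuter, Matrix.smul_apply, Matrix.add_apply, vecMulVec_apply, Pi.smul_apply,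
    Pi.add_apply, smul_eq_mul]
  field_simp
  ring

end SymmetricProduct

section Rotation

theorem transpose_mul_self_mul {l m n R : Type*} [Fintype l] [Fintype m] [CommSemiring R]
    (A : Matrix l m R) (B : Matrix m n R) : (A * B)ᵀ * (A * B) = Bᵀ * (Aᵀ * A) * B := by
  simp only [transpose_mul, Matrix.mul_assoc]

variable {n R : Type*} [Fintype n] [DecidableEq n] [CommRing R]

theorem transpose_mul_self_mul_eq_iff {M F G : Matrix n n R} (hG : IsUnit G.det) :
    (M * G)ᵀ * (M * G) = Fᵀ * F ↔ Mᵀ * M = (G⁻¹)ᵀ * (Fᵀ * F) * G⁻¹ := by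
  constructor
  · intro h
    rw [← h, ← transpose_mul_self_mul, mul_nonsing_inv_cancel_right _ _ hG]
  · intro h
    rw [transpose_mul_self_mul, h, ← transpose_mul_self_mul, ← transpose_mul_self_mul,
      nonsing_inv_mul_cancel_right _ _ hG]

theorem det_one_add_vecMulVec (a m : n → R) : (1 + vecMulVec a m).det = 1 + a ⬝ᵥ m := by
  rw [vecMulVec_eq Unit, det_one_add_replicateCol_mul_replicateRow, dotProduct_comm]

variable {K : Type*} [Field K] [LinearOrder K] [IsStrictOrderedRing K]

theorem exists_specialOrthogonal_mul_eq_iff {F B : Matrix n n K} (hF : F.det ≠ 0) :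
    (∃ Q ∈ specialOrthogonalGroup n K, Q * F = B) ↔ Bᵀ * B = Fᵀ * F ∧ 0 < F.det * B.det := by
  constructor
  · rintro ⟨Q, hQ, rfl⟩
    obtain ⟨hQQ, hQdet⟩ := mem_specialOrthogonalGroup_iff.mp hQ
    rw [mem_orthogonalGroup_iff'] at hQQ
    constructor
    · rw [transpose_mul, mul_assoc, ← mul_assoc Qᵀ, hQQ, one_mul]
    · rw [det_mul, hQdet, one_mul]
      exact mul_self_pos.mpr hF
  · rintro ⟨hgram, hdet⟩
    have hQF : B * F⁻¹ * F = B := nonsing_inv_mul_cancel_right _ _ hF.isUnit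
    have hQQ : (B * F⁻¹)ᵀ * (B * F⁻¹) = 1 := by
      rw [transpose_mul_self_mul, hgram, ← transpose_mul_self_mul, mul_nonsing_inv _ hF.isUnit,
        transpose_one, one_mul]
    have hQdet_sq : (B * F⁻¹).det ^ 2 = 1 := by
      simpa only [det_mul, det_transpose, det_one, ← sq] using congrArg det hQQ
    have hQdet_pos : 0 < (B * F⁻¹).det := by
      refine pos_of_mul_pos_left (b := F.det * F.det) ?_ (mul_self_nonneg _)
      rwa [← mul_assoc, ← det_mul, hQF, mul_comm]
    have hQdet : (B * F⁻¹).det = 1 :=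
      (pow_eq_one_iff_of_nonneg hQdet_pos.le two_ne_zero).mp hQdet_sq
    exact ⟨B * F⁻¹, mem_specialOrthogonalGroup_iff.mpr
      ⟨(mem_orthogonalGroup_iff' n K).mpr hQQ, hQdet⟩, hQF⟩

theorem exists_specialOrthogonal_mul_sub_eq_vecMulVec_iff {F G : Matrix n n K}
    (hFG : 0 < F.det * G.det) (a m : n → K) :
    (∃ Q ∈ specialOrthogonalGroup n K, Q * F - G = vecMulVec a (Gᵀ *ᵥ m)) ↔
      (1 + vecMulVec a m)ᵀ * (1 + vecMulVec a m) = (G⁻¹)ᵀ * (Fᵀ * F) * G⁻¹ ∧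
        0 < 1 + a ⬝ᵥ m := by
  have hG : IsUnit G.det := (right_ne_zero_of_mul hFG.ne').isUnit
  have hshear : vecMulVec a (Gᵀ *ᵥ m) + G = (1 + vecMulVec a m) * G := by
    rw [add_mul, one_mul, vecMulVec_mul, mulVec_transpose, add_comm]
  have hdet : 0 < F.det * ((1 + vecMulVec a m) * G).det ↔ 0 < 1 + a ⬝ᵥ m := by
    rw [det_mul, det_one_add_vecMulVec, mul_left_comm, mul_pos_iff_of_pos_right hFG]
  simp only [sub_eq_iff_eq_add, hshear, transpose_mul_self_mul_eq_iff hG, hdet,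
    exists_specialOrthogonal_mul_eq_iff (left_ne_zero_of_mul hFG.ne')]

end Rotation

section Eigenvectors

variable {n : Type*} [Fintype n]

theorem ne_zero_of_dotProduct_self_eq_one {R : Type*} [Semiring R] [Nontrivial R] {u : n → R}
    (hu : u ⬝ᵥ u = 1) : u ≠ 0 := by
  rintro rfl
  exact zero_ne_one ((zero_dotProduct _).symm.trans hu)

theorem eigenvalue_pos_of_posDef {C : Matrix n n ℝ} (hC : C.PosDef) {u : n → ℝ} {c : ℝ}
    (hu : u ≠ 0) (hCu : C *ᵥ u = c • u) : 0 < c := by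
  have hpos : 0 < u ⬝ᵥ (C *ᵥ u) := hC.dotProduct_mulVec_pos hu
  rw [hCu, dotProduct_smul, smul_eq_mul] at hpos
  exact pos_of_mul_pos_left hpos (Finset.sum_nonneg fun i _ => mul_self_nonneg (u i))

variable [DecidableEq n]

theorem eq_one_add_smul_vecMulVec_add_smul_vecMulVec {R : Type*} [CommRing R] {C : Matrix n n R}
    {u v : n → R} {c d : R} (huu : u ⬝ᵥ u = 1) (hvv : v ⬝ᵥ v = 1) (huv : u ⬝ᵥ v = 0)
    (hu : C *ᵥ u = c • u) (hv : C *ᵥ v = d • v)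
    (hfix : ∀ w, u ⬝ᵥ w = 0 → v ⬝ᵥ w = 0 → C *ᵥ w = w) :
    C = 1 + (c - 1) • vecMulVec u u + (d - 1) • vecMulVec v v := by
  have hvu : v ⬝ᵥ u = 0 := by rw [dotProduct_comm, huv]
  refine mulVec_injective (funext fun x => ?_)
  have hrest := hfix (x - (u ⬝ᵥ x) • u - (v ⬝ᵥ x) • v)
    (by simp [dotProduct_sub, huu, huv]) (by simp [dotProduct_sub, hvv, hvu])
  simp only [mulVec_sub, mulVec_smul, hu, hv] at hrest
  simp only [add_mulVec, one_mulVec, smul_mulVec, vecMulVec_mulVec, op_smul_eq_smul]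
  linear_combination (norm := module) hrest

theorem posDef_transpose_mul_self {A : Matrix n n ℝ} (hA : IsUnit A.det) : (Aᵀ * A).PosDef := by
  rw [← conjTranspose_eq_transpose_of_trivial]
  exact .conjTranspose_mul_self A
    (mulVec_injective_iff_isUnit.mpr ((isUnit_iff_isUnit_det A).mpr hA))

theorem sum_dotProduct_smul_eq {R : Type*} [CommRing R] {u : n → n → R}
    (hu : ∀ i j, u i ⬝ᵥ u j = (1 : Matrix n n R) i j) (v : n → R) :
    ∑ i, (u i ⬝ᵥ v) • u i = v := by
  have hUU : (of u) * (of u)ᵀ = 1 := by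
    ext i j
    exact hu i j
  calc ∑ i, (u i ⬝ᵥ v) • u i = (of u)ᵀ *ᵥ (of u *ᵥ v) := by
        ext j
        simp [mulVec, dotProduct, mul_comm]
    _ = v := by rw [mulVec_mulVec, mul_eq_one_comm.mp hUU, one_mulVec]

theorem mulVec_eq_self_of_dotProduct_eq_zero {R : Type*} [CommRing R]
    {C : Matrix (Fin 3) (Fin 3) R} {u1 u2 u3 v : Fin 3 → R} (hCu2 : C *ᵥ u2 = u2)
    (h11 : u1 ⬝ᵥ u1 = 1) (h22 : u2 ⬝ᵥ u2 = 1) (h33 : u3 ⬝ᵥ u3 = 1) (h12 : u1 ⬝ᵥ u2 = 0)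
    (h13 : u1 ⬝ᵥ u3 = 0) (h23 : u2 ⬝ᵥ u3 = 0) (h1v : u1 ⬝ᵥ v = 0) (h3v : u3 ⬝ᵥ v = 0) :
    C *ᵥ v = v := by
  have horth (i j : Fin 3) :
      ![u1, u2, u3] i ⬝ᵥ ![u1, u2, u3] j = (1 : Matrix (Fin 3) (Fin 3) R) i j := by
    fin_cases i <;> fin_cases j <;>
      simp [h11, h22, h33, h12, h13, h23, dotProduct_comm u2 u1, dotProduct_comm u3 u1,
        dotProduct_comm u3 u2]
  have hv : (u2 ⬝ᵥ v) • u2 = v := by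
    simpa [Fin.sum_univ_three, h1v, h3v] using sum_dotProduct_smul_eq horth v
  rw [← hv, mulVec_smul, hCu2]

end Eigenvectors

section StretchEquation

variable {K : Type*} [Field K] [LinearOrder K] [IsStrictOrderedRing K]

theorem eq_div_of_quadratic_eq_zero {s t x : K} (hs : 0 < s) (hst : s < t)
    (hquad : (t ^ 2 - s ^ 2) * x ^ 2 - 2 * (s ^ 2 + t ^ 2) * x + (t ^ 2 - s ^ 2) = 0)
    (hlt : (t ^ 2 - s ^ 2) * x < s ^ 2 + t ^ 2) : x = (t - s) / (t + s) := by
  have hfactor : ((t - s) - (t + s) * x) * ((t + s) - (t - s) * x) = 0 := by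
    linear_combination hquad
  rcases mul_eq_zero.mp hfactor with hroot | hroot
  · rw [eq_div_iff (by linarith)]
    linear_combination -hroot
  · have hsq : (t ^ 2 - s ^ 2) * x = (t + s) ^ 2 := by linear_combination -(t + s) * hroot
    linarith [mul_pos hs (hs.trans hst), add_sq t s]

variable {n : Type*} [Fintype n]

theorem four_mul_dotProduct_self_of_two_smul_add_smul_eq_neg {R : Type*} [CommRing R]
    {b w w' : n → R} {x : R} (h : (2 : R) • b + x • w = -w') :
    4 * (b ⬝ᵥ b) = x ^ 2 * (w ⬝ᵥ w) + 2 * x * (w ⬝ᵥ w') + w' ⬝ᵥ w' := by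
  have h2b : (2 : R) • b = -(w' + x • w) := by linear_combination (norm := module) h
  have hdot := congrArg (fun v => v ⬝ᵥ v) h2b
  simp only [neg_dotProduct_neg, smul_dotProduct, dotProduct_smul, add_dotProduct,
    dotProduct_add, dotProduct_comm w' w, smul_eq_mul] at hdot
  linear_combination hdot

theorem two_mul_dotProduct_of_two_smul_add_smul_eq_neg {R : Type*} [CommRing R] {b w w' : n → R}
    {x : R} (h : (2 : R) • b + x • w = -w') : 2 * (b ⬝ᵥ w) = -(x * (w ⬝ᵥ w) + w ⬝ᵥ w') := by
  have hdot := congrArg (· ⬝ᵥ w) h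
  simp only [neg_dotProduct, smul_dotProduct, add_dotProduct, dotProduct_comm w' w,
    smul_eq_mul] at hdot
  linear_combination hdot

theorem two_smul_add_dotProduct_self_smul_eq_neg_iff {b w w' : n → K} {s t : K} (hs : 0 < s)
    (hst : s < t) (hww : w ⬝ᵥ w = t ^ 2 - s ^ 2) (hww' : w ⬝ᵥ w' = 2 - s ^ 2 - t ^ 2)
    (hw'w' : w' ⬝ᵥ w' = t ^ 2 - s ^ 2) :
    (2 : K) • b + (b ⬝ᵥ b) • w = -w' ∧ 0 < 1 + b ⬝ᵥ w ↔
      (2 : K) • b + ((t - s) / (t + s)) • w = -w' := by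
  have hnorm {x : K} (hx : (2 : K) • b + x • w = -w') :
      4 * (b ⬝ᵥ b) = x ^ 2 * (t ^ 2 - s ^ 2) + 2 * x * (2 - s ^ 2 - t ^ 2) + (t ^ 2 - s ^ 2) := by
    rw [four_mul_dotProduct_self_of_two_smul_add_smul_eq_neg hx, hww, hww', hw'w']
  have hdot {x : K} (hx : (2 : K) • b + x • w = -w') :
      2 * (b ⬝ᵥ w) = -(x * (t ^ 2 - s ^ 2) + (2 - s ^ 2 - t ^ 2)) := by
    rw [two_mul_dotProduct_of_two_smul_add_smul_eq_neg hx, hww, hww']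
  constructor
  · rintro ⟨h, hpos⟩
    -- The other root `(t + s) / (t - s)` of the quadratic would give `1 + b ⬝ᵥ w = -s * t`.
    have hbb : b ⬝ᵥ b = (t - s) / (t + s) :=
      eq_div_of_quadratic_eq_zero hs hst (by linear_combination -hnorm h) (by linarith [hdot h])
    rwa [hbb] at h
  · intro h
    generalize hr : (t - s) / (t + s) = r at h
    have hr_mul : r * (t + s) = t - s := by rw [← hr, div_mul_cancel₀ _ (by linarith)]
    have hbb : b ⬝ᵥ b = r := by
      linear_combination (1 / 4) * hnorm h + (1 / 4) * ((t - s) * r - (t + s)) * hr_mul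
    have hbw : 1 + b ⬝ᵥ w = s * t := by
      linear_combination (1 / 2) * hdot h - (1 / 2) * (t - s) * hr_mul
    exact ⟨by rwa [hbb], hbw ▸ mul_pos hs (hs.trans hst)⟩

end StretchEquation

section Twins

variable {n : Type*}

/-- The vector `a` of the Ball–James solution `a ⊗ n̂`, in any dimension; `aSol` is the case
`n = Fin 3`. -/
def twinShear (l1 l3 κ ρ : ℝ) (u1 u3 : n → ℝ) : n → ℝ :=
  ρ • (√(l3 * (1 - l1) / (l3 - l1)) • u1 + (κ * √(l1 * (l3 - 1) / (l3 - l1))) • u3)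

/-- For `κ = ±1`, the normals `w κ` of the two hyperplanes on which the quadratic form of `C - 1`
vanishes, that is, of the hyperplanes whose vectors keep their length under `F * G⁻¹`. -/
def unstretchedNormal (l1 l3 κ : ℝ) (u1 u3 : n → ℝ) : n → ℝ :=
  -√(1 - l1) • u1 + (κ * √(l3 - 1)) • u3

variable {l1 l3 κ : ℝ} {u1 u3 : n → ℝ}

theorem smul_eq_twinShear_iff {ρ μ : ℝ} {a : n → ℝ} (hμ : μ ≠ 0) :
    μ • a = twinShear l1 l3 κ ρ u1 u3 ↔ a = twinShear l1 l3 κ (μ⁻¹ * ρ) u1 u3 := by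
  rw [twinShear, twinShear, mul_smul μ⁻¹, eq_inv_smul_iff₀ hμ]

theorem neg_symOuter_unstretchedNormal (hl1 : l1 ≤ 1) (hl3 : 1 ≤ l3) (hκ : κ ^ 2 = 1)
    (u1 u3 : n → ℝ) :
    -symOuter (unstretchedNormal l1 l3 κ u1 u3) (unstretchedNormal l1 l3 (-κ) u1 u3) =
      (l1 - 1) • vecMulVec u1 u1 + (l3 - 1) • vecMulVec u3 u3 := by
  have hp : √(1 - l1) ^ 2 = 1 - l1 := Real.sq_sqrt (by linarith)
  have hq : √(l3 - 1) ^ 2 = l3 - 1 := Real.sq_sqrt (by linarith)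
  ext i j
  simp only [symOuter, unstretchedNormal, Matrix.neg_apply, Matrix.smul_apply, Matrix.add_apply,
    vecMulVec_apply, Pi.smul_apply, Pi.add_apply, smul_eq_mul]
  linear_combination -u1 i * u1 j * hp + κ ^ 2 * u3 i * u3 j * hq
    + (l3 - 1) * u3 i * u3 j * hκ

theorem two_smul_add_smul_unstretchedNormal_eq_neg_iff (hl1_pos : 0 < l1)
    (hl1 : l1 ≤ 1) (hl3 : 1 ≤ l3) (hl13 : l1 < l3) (κ : ℝ) (b u1 u3 : n → ℝ) :
    (2 : ℝ) • b + ((√l3 - √l1) / (√l3 + √l1)) • unstretchedNormal l1 l3 κ u1 u3 =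
        -unstretchedNormal l1 l3 (-κ) u1 u3 ↔
      b = twinShear l1 l3 κ ((√l3 - √l1) / √(l3 - l1)) u1 u3 := by
  have hs : √l1 ^ 2 = l1 := Real.sq_sqrt hl1_pos.le
  have ht : √l3 ^ 2 = l3 := Real.sq_sqrt (by linarith)
  have hd : √(l3 - l1) ^ 2 = √l3 ^ 2 - √l1 ^ 2 := by rw [hs, ht, Real.sq_sqrt (by linarith)]
  have hd0 : √(l3 - l1) ≠ 0 := (Real.sqrt_pos.mpr (by linarith)).ne'
  have hst : √l3 + √l1 ≠ 0 := by positivity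
  have hshear : (2 : ℝ) • twinShear l1 l3 κ ((√l3 - √l1) / √(l3 - l1)) u1 u3 =
      -unstretchedNormal l1 l3 (-κ) u1 u3
        - ((√l3 - √l1) / (√l3 + √l1)) • unstretchedNormal l1 l3 κ u1 u3 := by
    rw [twinShear, Real.sqrt_div (by nlinarith), Real.sqrt_div (by nlinarith),
      Real.sqrt_mul (by linarith), Real.sqrt_mul hl1_pos.le]
    ext i
    simp only [unstretchedNormal, Pi.smul_apply, Pi.add_apply, Pi.sub_apply, Pi.neg_apply,
      smul_eq_mul]
    field_simp
    linear_combination -2 * (√l3 * √(1 - l1) * u1 i + √l1 * κ * √(l3 - 1) * u3 i) * hd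
  rw [← eq_sub_iff_add_eq, ← hshear, (smul_right_injective _ (two_ne_zero' ℝ)).eq_iff]

variable [Fintype n]

/-- The vector `n̂` of the Ball–James solution `a ⊗ n̂`, in any dimension; `nSol` is the case
`n = Fin 3`. -/
def twinNormal (l1 l3 κ ρ : ℝ) (G : Matrix n n ℝ) (u1 u3 : n → ℝ) : n → ℝ :=
  ((√l3 - √l1) / (ρ * √(l3 - l1))) • (-√(1 - l1) • Gᵀ *ᵥ u1 + (κ * √(l3 - 1)) • Gᵀ *ᵥ u3)

theorem twinNormal_eq (l1 l3 κ ρ : ℝ) (G : Matrix n n ℝ) (u1 u3 : n → ℝ) :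
    twinNormal l1 l3 κ ρ G u1 u3 =
      Gᵀ *ᵥ (((√l3 - √l1) / (ρ * √(l3 - l1))) • unstretchedNormal l1 l3 κ u1 u3) := by
  simp only [twinNormal, unstretchedNormal, mulVec_add, mulVec_smul]

theorem unstretchedNormal_dotProduct (hl1 : l1 ≤ 1) (hl3 : 1 ≤ l3) (h11 : u1 ⬝ᵥ u1 = 1)
    (h33 : u3 ⬝ᵥ u3 = 1) (h13 : u1 ⬝ᵥ u3 = 0) (κ κ' : ℝ) :
    unstretchedNormal l1 l3 κ u1 u3 ⬝ᵥ unstretchedNormal l1 l3 κ' u1 u3 =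
      (1 - l1) + κ * κ' * (l3 - 1) := by
  have hp : √(1 - l1) ^ 2 = 1 - l1 := Real.sq_sqrt (by linarith)
  have hq : √(l3 - 1) ^ 2 = l3 - 1 := Real.sq_sqrt (by linarith)
  simp only [unstretchedNormal, add_dotProduct, dotProduct_add, smul_dotProduct, dotProduct_smul,
    smul_eq_mul, h11, h33, h13, dotProduct_comm u3 u1]
  linear_combination hp + κ * κ' * hq

theorem two_smul_add_dotProduct_self_smul_unstretchedNormal_iff (hl1_pos : 0 < l1) (hl1 : l1 ≤ 1)
    (hl3 : 1 ≤ l3) (hl13 : l1 < l3) (h11 : u1 ⬝ᵥ u1 = 1) (h33 : u3 ⬝ᵥ u3 = 1) (h13 : u1 ⬝ᵥ u3 = 0)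
    (hκ : κ ^ 2 = 1) {μ : ℝ} (hμ : μ ≠ 0) (a : n → ℝ) :
    (2 : ℝ) • a + (a ⬝ᵥ a) • μ • unstretchedNormal l1 l3 κ u1 u3 =
          -(μ⁻¹ • unstretchedNormal l1 l3 (-κ) u1 u3) ∧
        0 < 1 + a ⬝ᵥ (μ • unstretchedNormal l1 l3 κ u1 u3) ↔
      a = twinShear l1 l3 κ (μ⁻¹ * ((√l3 - √l1) / √(l3 - l1))) u1 u3 := by
  have hs : √l1 ^ 2 = l1 := Real.sq_sqrt hl1_pos.le
  have ht : √l3 ^ 2 = l3 := Real.sq_sqrt (by linarith)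
  have hdot := unstretchedNormal_dotProduct hl1 hl3 h11 h33 h13
  rw [← smul_eq_twinShear_iff hμ,
    ← two_smul_add_smul_unstretchedNormal_eq_neg_iff hl1_pos hl1 hl3 hl13,
    ← two_smul_add_dotProduct_self_smul_eq_neg_iff (Real.sqrt_pos.mpr hl1_pos)
      (Real.sqrt_lt_sqrt hl1_pos.le hl13)
      (by rw [hdot, hs, ht]; linear_combination (l3 - 1) * hκ)
      (by rw [hdot, hs, ht]; linear_combination -(l3 - 1) * hκ)
      (by rw [hdot, hs, ht]; linear_combination (l3 - 1) * hκ)]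
  refine and_congr ?_ (by rw [dotProduct_smul, smul_dotProduct])
  rw [← smul_neg, eq_inv_smul_iff₀ hμ]
  congr! 1
  simp only [smul_dotProduct, dotProduct_smul, smul_eq_mul]
  module

theorem symOuter_eq_neg_symOuter_unstretchedNormal_iff (hl1 : l1 ≤ 1) (hl3 : 1 ≤ l3)
    (hl13 : l1 < l3) (h11 : u1 ⬝ᵥ u1 = 1) (h33 : u3 ⬝ᵥ u3 = 1) (h13 : u1 ⬝ᵥ u3 = 0)
    (v w : n → ℝ) :
    symOuter v w =
        -symOuter (unstretchedNormal l1 l3 1 u1 u3) (unstretchedNormal l1 l3 (-1) u1 u3) ↔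
      ∃ κ μ : ℝ, (κ = 1 ∨ κ = -1) ∧ μ ≠ 0 ∧ v = μ • unstretchedNormal l1 l3 κ u1 u3 ∧
        w = -(μ⁻¹ • unstretchedNormal l1 l3 (-κ) u1 u3) := by
  have hne {κ : ℝ} (hκ : κ ^ 2 = 1) : unstretchedNormal l1 l3 κ u1 u3 ≠ 0 := by
    rw [← dotProduct_self_eq_zero.ne, unstretchedNormal_dotProduct hl1 hl3 h11 h33 h13, ← sq, hκ]
    linarith
  rw [eq_neg_iff_add_eq_zero, ← neg_eq_iff_add_eq_zero, ← symOuter_neg_right,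
    symOuter_eq_symOuter_iff (hne (by norm_num)) (hne (by norm_num))]
  constructor
  · rintro ⟨μ, hμ, ⟨hv, hw⟩ | ⟨hv, hw⟩⟩
    · exact ⟨1, μ, .inl rfl, hμ, hv, neg_eq_iff_eq_neg.mp hw⟩
    · exact ⟨-1, μ, .inr rfl, hμ, hv, by rw [neg_neg, ← hw, neg_neg]⟩
  · rintro ⟨κ, μ, rfl | rfl, hμ, hv, hw⟩
    · exact ⟨μ, hμ, .inl ⟨hv, neg_eq_iff_eq_neg.mpr hw⟩⟩
    · exact ⟨μ, hμ, .inr ⟨hv, by rw [hw, neg_neg, neg_neg]⟩⟩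

theorem transpose_mul_self_one_add_vecMulVec_eq_iff [DecidableEq n] (hl1_pos : 0 < l1)
    (hl1 : l1 ≤ 1) (hl3 : 1 ≤ l3) (hl13 : l1 < l3) (h11 : u1 ⬝ᵥ u1 = 1) (h33 : u3 ⬝ᵥ u3 = 1)
    (h13 : u1 ⬝ᵥ u3 = 0) (a m : n → ℝ) :
    (1 + vecMulVec a m)ᵀ * (1 + vecMulVec a m) =
          1 + (l1 - 1) • vecMulVec u1 u1 + (l3 - 1) • vecMulVec u3 u3 ∧ 0 < 1 + a ⬝ᵥ m ↔
      ∃ κ ρ : ℝ, (κ = 1 ∨ κ = -1) ∧ ρ ≠ 0 ∧ a = twinShear l1 l3 κ ρ u1 u3 ∧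
        m = ((√l3 - √l1) / (ρ * √(l3 - l1))) • unstretchedNormal l1 l3 κ u1 u3 := by
  have hshear {κ μ : ℝ} (hκ : κ = 1 ∨ κ = -1) (hμ : μ ≠ 0) :=
    two_smul_add_dotProduct_self_smul_unstretchedNormal_iff hl1_pos hl1 hl3 hl13 h11 h33 h13
      (sq_eq_one_iff.mpr hκ) hμ a
  have hd : √(l3 - l1) ≠ 0 := (Real.sqrt_pos.mpr (by linarith)).ne'
  have hst : √l3 - √l1 ≠ 0 := sub_ne_zero.mpr (Real.sqrt_lt_sqrt hl1_pos.le hl13).ne'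
  rw [transpose_mul_self_one_add_vecMulVec, add_assoc, add_right_inj,
    ← neg_symOuter_unstretchedNormal hl1 hl3 (one_pow 2),
    symOuter_eq_neg_symOuter_unstretchedNormal_iff hl1 hl3 hl13 h11 h33 h13]
  constructor
  · rintro ⟨⟨κ, μ, hκ, hμ, rfl, hc⟩, hpos⟩
    refine ⟨κ, _, hκ, ?_, (hshear hκ hμ).mp ⟨hc, hpos⟩, ?_⟩
    · positivity
    · congr 1
      field_simp
  · rintro ⟨κ, ρ, hκ, hρ, ha, rfl⟩
    have hμ : (√l3 - √l1) / (ρ * √(l3 - l1)) ≠ 0 := by positivity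
    obtain ⟨hc, hpos⟩ := (hshear hκ hμ).mpr (by rw [ha]; congr 1; field_simp)
    exact ⟨⟨κ, _, hκ, hμ, rfl, hc⟩, hpos⟩

end Twins

theorem ball_james_general {n : Type*} [Fintype n] [DecidableEq n] (F G : Matrix n n ℝ)
    (hFG : 0 < F.det * G.det) (C : Matrix n n ℝ) (hC : C = (G⁻¹)ᵀ * (Fᵀ * F) * G⁻¹)
    (l1 l3 : ℝ) (hl1 : l1 ≤ 1) (hl3 : 1 ≤ l3) (hl13 : l1 < l3) (u1 u3 : n → ℝ)
    (hCu1 : C *ᵥ u1 = l1 • u1) (hCu3 : C *ᵥ u3 = l3 • u3)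
    (hfix : ∀ v, u1 ⬝ᵥ v = 0 → u3 ⬝ᵥ v = 0 → C *ᵥ v = v)
    (h11 : u1 ⬝ᵥ u1 = 1) (h33 : u3 ⬝ᵥ u3 = 1) (h13 : u1 ⬝ᵥ u3 = 0) (a ν : n → ℝ) :
    (∃ Q ∈ specialOrthogonalGroup n ℝ, Q * F - G = vecMulVec a ν) ↔
      ∃ κ ρ : ℝ, (κ = 1 ∨ κ = -1) ∧ ρ ≠ 0 ∧ a = twinShear l1 l3 κ ρ u1 u3 ∧
        ν = twinNormal l1 l3 κ ρ G u1 u3 := by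
  have hFdet : IsUnit F.det := (left_ne_zero_of_mul hFG.ne').isUnit
  have hGdet : IsUnit G.det := (right_ne_zero_of_mul hFG.ne').isUnit
  have hG : IsUnit Gᵀ := (isUnit_transpose G).mpr ((isUnit_iff_isUnit_det G).mpr hGdet)
  have hC_posDef : C.PosDef := by
    rw [hC, ← transpose_mul_self_mul]
    refine posDef_transpose_mul_self ?_
    rw [det_mul]
    exact hFdet.mul (isUnit_nonsing_inv_det G hGdet)
  have hl1_pos : 0 < l1 :=
    eigenvalue_pos_of_posDef hC_posDef (ne_zero_of_dotProduct_self_eq_one h11) hCu1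
  obtain ⟨m, rfl⟩ := mulVec_surjective_iff_isUnit.mpr hG ν
  rw [exists_specialOrthogonal_mul_sub_eq_vecMulVec_iff hFG, ← hC,
    eq_one_add_smul_vecMulVec_add_smul_vecMulVec h11 h33 h13 hCu1 hCu3 hfix,
    transpose_mul_self_one_add_vecMulVec_eq_iff hl1_pos hl1 hl3 hl13 h11 h33 h13]
  simp only [twinNormal_eq, (mulVec_injective_iff_isUnit.mpr hG).eq_iff]

theorem mem_specialOrthogonalGroup_iff_SO3 {Q : M3} :
    Q ∈ specialOrthogonalGroup (Fin 3) ℝ ↔ SO3 Q := by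
  rw [mem_specialOrthogonalGroup_iff, mem_orthogonalGroup_iff', SO3]

/-- **Ball–James.** If `C = G⁻ᵀ Fᵀ F G⁻¹ ≠ I` has eigenvalues `λ₁ ≤ 1 = λ₂ ≤ λ₃`
(with `λ₁ < λ₃`) and orthonormal eigenvectors `û₁, û₂, û₃`, then for each
`κ = ±1` and `ρ ≠ 0` the pair `(a, n̂)` given by the formulas solves
`Q F − G = a ⊗ n̂` for some `Q ∈ SO(3)`; and these give the two solutions. -/
theorem ball_james
    (F G : M3) (hF : 0 < F.det) (hG : 0 < G.det)
    (C : M3) (hC : C = (G⁻¹).transpose * (F.transpose * F) * G⁻¹) (hCne : C ≠ 1)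
    (l1 l3 : ℝ) (hl1 : l1 ≤ 1) (hl3 : 1 ≤ l3) (hl13 : l1 < l3)
    (u1 u2 u3 : V3)
    (hCu1 : C.mulVec u1 = l1 • u1) (hCu2 : C.mulVec u2 = u2)
    (hCu3 : C.mulVec u3 = l3 • u3)
    (h11 : u1 ⬝ᵥ u1 = 1) (h22 : u2 ⬝ᵥ u2 = 1) (h33 : u3 ⬝ᵥ u3 = 1)
    (h12 : u1 ⬝ᵥ u2 = 0) (h13 : u1 ⬝ᵥ u3 = 0) (h23 : u2 ⬝ᵥ u3 = 0) :
    (∀ κ ρ : ℝ, (κ = 1 ∨ κ = -1) → ρ ≠ 0 →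
      ∃ Q : M3, SO3 Q ∧
        Q * F - G = outer (aSol l1 l3 κ ρ u1 u3) (nSol l1 l3 κ ρ G u1 u3)) ∧
    (∀ (Q : M3) (a n : V3), SO3 Q → Q * F - G = outer a n →
      ∃ κ ρ : ℝ, (κ = 1 ∨ κ = -1) ∧ ρ ≠ 0 ∧
        a = aSol l1 l3 κ ρ u1 u3 ∧ n = nSol l1 l3 κ ρ G u1 u3) := by
  have hfix (v : V3) (h1v : u1 ⬝ᵥ v = 0) (h3v : u3 ⬝ᵥ v = 0) : C *ᵥ v = v :=
    mulVec_eq_self_of_dotProduct_eq_zero hCu2 h11 h22 h33 h12 h13 h23 h1v h3v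
  have hsol := ball_james_general F G (mul_pos hF hG) C hC l1 l3 hl1 hl3 hl13 u1 u3 hCu1 hCu3 hfix
    h11 h33 h13
  simp only [mem_specialOrthogonalGroup_iff_SO3] at hsol
  exact ⟨fun κ ρ hκ hρ => (hsol _ _).mpr ⟨κ, ρ, hκ, hρ, rfl, rfl⟩,
    fun Q a n hQ h => (hsol a n).mp ⟨Q, hQ, h⟩⟩
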